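/- Let p, q, r be natural numbers with p ≥ r, and set m = p + q + r, assumed positive. Let F ∈ M_m(ℂ) be the block-diagonal matrix with diagonal blocks J_{p+q} and J_r (the second block being absent if r = 0). Then there exist a diagonal matrix S ∈ M_m(ℂ) with integer entries and a nilpotent matrix X ∈ M_{q+r}(ℂ) with X^{q+r-1} ≠ 0 when q + r ≥ 1, such that S·F − F·S = −2·F and the block-diagonal matrix diag(J_p, X) lies in the closure, in the standard (Euclidean) topology of M_m(ℂ), of the set {g·F·g⁻¹ : g ∈ GL_m(ℂ), g·S = S·g}. -/

import Mathlib

/-- The `d × d` nilpotent lower-triangular Jordan block. -/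
def jordanBlock (d : ℕ) : Matrix (Fin d) (Fin d) ℂ :=
  Matrix.of fun i j => if (i : ℕ) = (j : ℕ) + 1 then 1 else 0

/-- The block-diagonal matrix `diag(J_{p+q}, J_r)` in `M_{p+q+r}(ℂ)` (the second block
being absent when `r = 0`): `1`'s on the subdiagonal except at row `p + q`. -/
def twoBlockJordan (p q r : ℕ) : Matrix (Fin (p + q + r)) (Fin (p + q + r)) ℂ :=
  Matrix.of fun i j => if (i : ℕ) = (j : ℕ) + 1 ∧ (i : ℕ) ≠ p + q then 1 else 0

/-- The block-diagonal matrix `diag(A, B)`. -/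
def diagBlock (p d : ℕ) (A : Matrix (Fin p) (Fin p) ℂ) (B : Matrix (Fin d) (Fin d) ℂ) :
    Matrix (Fin (p + d)) (Fin (p + d)) ℂ :=
  Matrix.reindex finSumFinEquiv finSumFinEquiv (Matrix.fromBlocks A 0 0 B)

/-!
Cut the long chain of `F = diag(J_{p+q}, J_r)` after its `p`-th vector, so that `F` acts on
`ℂ^p ⊕ ℂ^q ⊕ ℂ^r` by `J_p`, `J_q`, `J_r` and a map `E : ℂ^p → ℂ^q` from the last vector of the
first chain to the first vector of the second. As `r ≤ p`, the chain of `J_r` embeds as the tail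
of the chain of `J_p`, by a map `P` with `J_p P = P J_r`. Conjugating `F` by
`(u, v, w) ↦ (u - t⁻¹ P w, t v, w)` replaces `E` by `t E` and creates the block `E P`, which joins
the end of the chain of `J_r` to the start of that of `J_q`. As `t → 0` the limit is `diag(J_p, X)`
with `X` a single chain of length `q + r`. All these matrices are homogeneous for a grading in
which `P` has degree `0`, which gives `S`.
-/

open Matrix Topology

section CentralizerOrbit

variable {M N F : Type*} [Monoid M] [Monoid N] [FunLike F M N] [MonoidHomClass F M N]

/-- The orbit of `f` under conjugation by the units commuting with `s`, written with the unfolded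
commutation condition so that it is syntactically the set in the theorem. -/
def centralizerOrbit (s f : M) : Set M :=
  {a | ∃ g : Mˣ, (g : M) * s = s * g ∧ a = g * f * ((g⁻¹ : Mˣ) : M)}

theorem mem_centralizerOrbit_of_semiconjBy {s f a g : M} (hg : IsUnit g) (hs : Commute g s)
    (h : SemiconjBy g f a) : a ∈ centralizerOrbit s f := by
  obtain ⟨u, rfl⟩ := hg
  exact ⟨u, hs, (Units.eq_mul_inv_iff_mul_eq u).2 h.symm⟩

theorem map_mem_centralizerOrbit (φ : F) {s f a : M} (ha : a ∈ centralizerOrbit s f) :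
    φ a ∈ centralizerOrbit (φ s) (φ f) := by
  obtain ⟨g, hs, rfl⟩ := ha
  have hg : Commute (g : M) s := hs
  refine mem_centralizerOrbit_of_semiconjBy (g.isUnit.map φ) (hg.map φ) (SemiconjBy.map ?_ φ)
  simp [SemiconjBy, mul_assoc]

theorem map_mem_closure_centralizerOrbit [TopologicalSpace M] [TopologicalSpace N] {φ : F}
    (hφ : Continuous φ) {s f a : M} (ha : a ∈ closure (centralizerOrbit s f)) :
    φ a ∈ closure (centralizerOrbit (φ s) (φ f)) :=
  map_mem_closure hφ ha fun _ => map_mem_centralizerOrbit φ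

end CentralizerOrbit

section BlockDegeneration

variable {K l m n : Type*} [Field K] [Fintype l] [Fintype m] [Fintype n]
  [DecidableEq l] [DecidableEq m] [DecidableEq n]
  {A : Matrix l l K} {B : Matrix m m K} {C : Matrix n n K} {E : Matrix m l K} {P : Matrix l n K}

/-- The change of basis of `K^l ⊕ K^m ⊕ K^n` that scales the middle summand by `t` and replaces
each `v` in the last one by `v - t⁻¹ • P v`. It trades a map `E : K^l → K^m` for `t • E` together
with the map `E * P : K^n → K^m`, which does not depend on `t`. -/
def shearScaling (P : Matrix l n K) (t : K) : Matrix (l ⊕ m ⊕ n) (l ⊕ m ⊕ n) K :=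
  fromBlocks 1 (fromCols 0 (-t⁻¹ • P)) 0 (fromBlocks (t • 1) 0 0 1)

theorem isUnit_shearScaling (P : Matrix l n K) {t : K} (ht : t ≠ 0) :
    IsUnit (shearScaling (m := m) P t) := by
  have ht' : IsUnit (t • (1 : Matrix m m K)) := isUnit_one.smul (Units.mk0 t ht)
  simp only [shearScaling, isUnit_fromBlocks_zero₂₁, isUnit_one, ht', and_self]

theorem commute_shearScaling {w : l ⊕ m ⊕ n → K}
    (hw : diagonal (w ∘ Sum.inl) * P = P * diagonal (w ∘ Sum.inr ∘ Sum.inr)) (t : K) :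
    Commute (shearScaling P t) (diagonal w) := by
  have hblocks : diagonal w = fromBlocks (diagonal (w ∘ Sum.inl)) 0 0
      (fromBlocks (diagonal (w ∘ Sum.inr ∘ Sum.inl)) 0 0
        (diagonal (w ∘ Sum.inr ∘ Sum.inr))) := by
    rw [fromBlocks_diagonal, fromBlocks_diagonal]
    congr 1
    ext (i | i | i) <;> rfl
  simp [hblocks, Commute, SemiconjBy, shearScaling, fromBlocks_multiply, fromCols_mul_fromBlocks,
    mul_fromCols, hw, -fromBlocks_diagonal]

theorem semiconjBy_shearScaling (hP : A * P = P * C) {t : K} (ht : t ≠ 0) :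
    SemiconjBy (shearScaling P t)
      (fromBlocks A 0 (fromRows E 0) (fromBlocks B 0 0 C))
      (fromBlocks A 0 (fromRows (t • E) 0) (fromBlocks B (E * P) 0 C)) := by
  have hEP : fromRows (t • E) (0 : Matrix n l K) * fromCols (0 : Matrix l m K) (-t⁻¹ • P) =
      fromBlocks 0 (-(E * P)) 0 0 := by
    simp [fromRows_mul_fromCols, -mul_fromCols, -fromRows_mul, ht]
  rw [SemiconjBy, shearScaling, fromBlocks_multiply, fromBlocks_multiply, fromBlocks_multiply, hEP]
  simp [fromBlocks_multiply, fromBlocks_add, fromCols_mul_fromBlocks, fromBlocks_mul_fromRows,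
    fromCols_mul_fromRows, mul_fromCols, hP]

theorem fromBlocks_mem_closure_centralizerOrbit [TopologicalSpace K] [ContinuousMul K]
    [(𝓝[≠] (0 : K)).NeBot] {w : l ⊕ m ⊕ n → K} (hP : A * P = P * C)
    (hw : diagonal (w ∘ Sum.inl) * P = P * diagonal (w ∘ Sum.inr ∘ Sum.inr)) :
    fromBlocks A 0 0 (fromBlocks B (E * P) 0 C) ∈
      closure (centralizerOrbit (diagonal w)
        (fromBlocks A 0 (fromRows E 0) (fromBlocks B 0 0 C))) := by
  let family (t : K) := fromBlocks A 0 (fromRows (t • E) 0) (fromBlocks B (E * P) 0 C)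
  have hrows : Continuous fun t : K => fromRows (t • E) (0 : Matrix n l K) := by
    refine continuous_matrix ?_
    rintro (_ | _) _
    · exact continuous_id.mul continuous_const
    · exact continuous_const
  have hfamily : Continuous family :=
    continuous_const.matrix_fromBlocks continuous_const hrows continuous_const
  have hzero : family 0 = fromBlocks A 0 0 (fromBlocks B (E * P) 0 C) := by
    simp only [family, zero_smul, fromRows_zero]
  rw [← hzero]
  exact map_mem_closure hfamily (dense_compl_singleton (0 : K) 0) fun t ht =>
    mem_centralizerOrbit_of_semiconjBy (isUnit_shearScaling P ht) (commute_shearScaling hw t)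
      (semiconjBy_shearScaling hP ht)

end BlockDegeneration

theorem diagonal_mul_sub_mul_diagonal_eq_smul {R m n : Type*} [CommRing R] [Fintype m] [Fintype n]
    [DecidableEq m] [DecidableEq n] {u : m → R} {v : n → R} {c : R} {A : Matrix m n R}
    (h : ∀ i j, A i j ≠ 0 → u i = v j + c) :
    diagonal u * A - A * diagonal v = c • A := by
  ext i j
  by_cases hA : A i j = 0
  · simp [hA]
  · simp only [Matrix.sub_apply, diagonal_mul, mul_diagonal, Matrix.smul_apply, smul_eq_mul,
      h i j hA]
    ring

section ShiftMatrix

variable {R : Type*}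

/-- The `m × n` matrix with `1`'s on the `k`-th diagonal below the main one, sending the `j`-th
basis vector to the `(j + k)`-th, or to `0` if there is none. -/
def shiftMatrix (R : Type*) [Zero R] [One R] (m n : ℕ) (k : ℤ) : Matrix (Fin m) (Fin n) R :=
  of fun i j => if (i : ℤ) = j + k then 1 else 0

theorem shiftMatrix_apply [Zero R] [One R] {m n : ℕ} {k : ℤ} (i : Fin m) (j : Fin n) :
    shiftMatrix R m n k i j = if (i : ℤ) = j + k then 1 else 0 :=
  rfl

theorem eq_add_of_shiftMatrix_apply_ne_zero [Zero R] [One R] {m n : ℕ} {k : ℤ} {i : Fin m}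
    {j : Fin n} (h : shiftMatrix R m n k i j ≠ 0) : (i : ℤ) = j + k := by
  by_contra hij
  exact h (if_neg hij)

theorem shiftMatrix_mul [NonAssocSemiring R] {l m n : ℕ} {a b : ℤ}
    (h : ∀ (i : Fin l) (j : Fin n), (i : ℤ) = j + (a + b) → 0 ≤ (j : ℤ) + b ∧ (j : ℤ) + b < m) :
    shiftMatrix R l m a * shiftMatrix R m n b = shiftMatrix R l n (a + b) := by
  ext i j
  simp only [mul_apply, shiftMatrix_apply, mul_ite, mul_one, mul_zero]
  by_cases hij : (i : ℤ) = j + (a + b)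
  · obtain ⟨h0, hm⟩ := h i j hij
    rw [if_pos hij, Finset.sum_eq_single ⟨((j : ℤ) + b).toNat, by omega⟩]
    · rw [if_pos (by simp only; omega), if_pos (by simp only; omega)]
    · exact fun k _ hk => if_neg fun hkj => hk (Fin.ext (by simp only; omega))
    · simp
  · rw [if_neg hij]
    refine Finset.sum_eq_zero fun k _ => ?_
    split_ifs <;> first | rfl | omega

theorem shiftMatrix_zero [Zero R] [One R] (n : ℕ) : shiftMatrix R n n 0 = 1 := by
  ext i j
  simp [shiftMatrix_apply, one_apply, Fin.ext_iff]

theorem shiftMatrix_one_pow [Semiring R] (n k : ℕ) :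
    shiftMatrix R n n 1 ^ k = shiftMatrix R n n k := by
  induction k with
  | zero => rw [pow_zero, Nat.cast_zero, shiftMatrix_zero]
  | succ k ih =>
    rw [pow_succ, ih, shiftMatrix_mul (fun i j hij => by omega), Nat.cast_succ]

end ShiftMatrix

section JordanBlock

theorem jordanBlock_eq_shiftMatrix (d : ℕ) : jordanBlock d = shiftMatrix ℂ d d 1 := by
  ext i j
  simp only [jordanBlock, shiftMatrix_apply, of_apply]
  norm_cast

theorem jordanBlock_pow (d k : ℕ) : jordanBlock d ^ k = shiftMatrix ℂ d d k := by
  rw [jordanBlock_eq_shiftMatrix, shiftMatrix_one_pow]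

theorem isNilpotent_jordanBlock (d : ℕ) : IsNilpotent (jordanBlock d) := by
  refine ⟨d, ?_⟩
  ext i j
  rw [jordanBlock_pow, shiftMatrix_apply, if_neg (by omega), Matrix.zero_apply]

theorem jordanBlock_pow_sub_one_ne_zero {d : ℕ} (hd : 1 ≤ d) : jordanBlock d ^ (d - 1) ≠ 0 := by
  intro h
  have hcorner := congrFun₂ h ⟨d - 1, by omega⟩ ⟨0, by omega⟩
  simp [jordanBlock_pow, shiftMatrix_apply] at hcorner

theorem jordanBlock_add (a b : ℕ) :
    jordanBlock (a + b) = reindex finSumFinEquiv finSumFinEquiv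
      (fromBlocks (jordanBlock a) 0 (shiftMatrix ℂ b a (1 - a)) (jordanBlock b)) := by
  rw [← Equiv.symm_apply_eq]
  ext (i | i) (j | j) <;>
    simp only [jordanBlock_eq_shiftMatrix, reindex_symm, reindex_apply, Equiv.symm_symm,
      submatrix_apply, finSumFinEquiv_apply_left, finSumFinEquiv_apply_right, fromBlocks_apply₁₁,
      fromBlocks_apply₁₂, fromBlocks_apply₂₁, fromBlocks_apply₂₂, shiftMatrix_apply,
      Fin.val_castAdd, Fin.val_natAdd, Matrix.zero_apply] <;>
    grind

theorem twoBlockJordan_eq_diagBlock (p q r : ℕ) :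
    twoBlockJordan p q r = diagBlock (p + q) r (jordanBlock (p + q)) (jordanBlock r) := by
  rw [diagBlock, ← Equiv.symm_apply_eq]
  ext (i | i) (j | j) <;>
    simp only [twoBlockJordan, jordanBlock, reindex_symm, reindex_apply, Equiv.symm_symm,
      submatrix_apply, finSumFinEquiv_apply_left, finSumFinEquiv_apply_right, fromBlocks_apply₁₁,
      fromBlocks_apply₁₂, fromBlocks_apply₂₁, fromBlocks_apply₂₂, of_apply, Fin.val_castAdd,
      Fin.val_natAdd, Matrix.zero_apply] <;>
    grind

/-- The regular nilpotent matrix of size `q + r` whose chain runs through the last `r` basis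
vectors and then through the first `q` ones. -/
noncomputable def rotatedJordanBlock (q r : ℕ) : Matrix (Fin (q + r)) (Fin (q + r)) ℂ :=
  reindexAlgEquiv ℂ ℂ finAddFlip (jordanBlock (r + q))

theorem isNilpotent_rotatedJordanBlock (q r : ℕ) : IsNilpotent (rotatedJordanBlock q r) :=
  (isNilpotent_jordanBlock (r + q)).map (reindexAlgEquiv ℂ ℂ finAddFlip)

theorem rotatedJordanBlock_pow_sub_one_ne_zero {q r : ℕ} (h : 1 ≤ q + r) :
    rotatedJordanBlock q r ^ (q + r - 1) ≠ 0 := by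
  rw [rotatedJordanBlock, ← map_pow, EmbeddingLike.map_ne_zero_iff, add_comm q r]
  exact jordanBlock_pow_sub_one_ne_zero (by omega)

theorem rotatedJordanBlock_eq_reindex_fromBlocks (q r : ℕ) :
    rotatedJordanBlock q r = reindex finSumFinEquiv finSumFinEquiv
      (fromBlocks (jordanBlock q) (shiftMatrix ℂ q r (1 - r)) 0 (jordanBlock r)) := by
  rw [rotatedJordanBlock, jordanBlock_add, coe_reindexAlgEquiv, eq_comm, ← Equiv.eq_symm_apply]
  ext (i | i) (j | j) <;> simp [finAddFlip]

end JordanBlock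

section ThreeBlocks

variable (p q r : ℕ)

/-- The position in `Fin (p + q + r)` of the basis vectors of `ℂ^p ⊕ ℂ^q ⊕ ℂ^r`. The blocks are
nested to the right so that `X` acts on the second summand. -/
def threeBlockEquiv : Fin p ⊕ Fin q ⊕ Fin r ≃ Fin (p + q + r) :=
  (Equiv.sumAssoc _ _ _).symm.trans
    ((Equiv.sumCongr finSumFinEquiv (Equiv.refl _)).trans finSumFinEquiv)

/-- The matrix of `diag(J_{p+q}, J_r)` in three blocks, `J_{p+q}` being cut after its `p`-th
basis vector. -/
def threeBlockJordan : Matrix (Fin p ⊕ Fin q ⊕ Fin r) (Fin p ⊕ Fin q ⊕ Fin r) ℂ :=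
  fromBlocks (jordanBlock p) 0 (fromRows (shiftMatrix ℂ q p (1 - p)) 0)
    (fromBlocks (jordanBlock q) 0 0 (jordanBlock r))

theorem twoBlockJordan_eq_reindex_threeBlockJordan :
    twoBlockJordan p q r =
      reindexAlgEquiv ℂ ℂ (threeBlockEquiv p q r) (threeBlockJordan p q r) := by
  rw [twoBlockJordan_eq_diagBlock, diagBlock, jordanBlock_add, coe_reindexAlgEquiv,
    ← Equiv.symm_apply_eq]
  ext (i | i | i) (j | j | j) <;> simp [threeBlockEquiv, threeBlockJordan]

theorem reindex_finCongr_diagBlock (h : p + (q + r) = p + q + r) (A : Matrix (Fin p) (Fin p) ℂ)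
    (B : Matrix (Fin q ⊕ Fin r) (Fin q ⊕ Fin r) ℂ) :
    reindex (finCongr h) (finCongr h)
        (diagBlock p (q + r) A (reindex finSumFinEquiv finSumFinEquiv B)) =
      reindexAlgEquiv ℂ ℂ (threeBlockEquiv p q r) (fromBlocks A 0 0 B) := by
  have hequiv : threeBlockEquiv p q r =
      (Equiv.sumCongr (Equiv.refl _) finSumFinEquiv).trans
        (finSumFinEquiv.trans (finCongr h)) := by
    ext (i | i | i) <;> simp [threeBlockEquiv, add_assoc]
  rw [hequiv, diagBlock, coe_reindexAlgEquiv, eq_comm, ← Equiv.symm_apply_eq,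
    ← Equiv.symm_apply_eq]
  ext (i | i) (j | j) <;> simp

/-- Degrees for which both `diag(J_{p+q}, J_r)` and its degeneration raise the degree by one: the
last vector of `J_r` has the same degree as the last of the first `p` vectors. -/
def chainDegree : Fin p ⊕ Fin q ⊕ Fin r → ℤ :=
  Sum.elim (fun i => i) (Sum.elim (fun i => p + i) (fun i => p - r + i))

/-- The grading matrix `S` in block coordinates. -/
def gradingMatrix : Matrix (Fin p ⊕ Fin q ⊕ Fin r) (Fin p ⊕ Fin q ⊕ Fin r) ℂ :=
  diagonal fun i => ((-2 * chainDegree p q r i : ℤ) : ℂ)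

theorem reindexAlgEquiv_gradingMatrix :
    reindexAlgEquiv ℂ ℂ (threeBlockEquiv p q r) (gradingMatrix p q r) =
      diagonal fun i => ((-2 * chainDegree p q r ((threeBlockEquiv p q r).symm i) : ℤ) : ℂ) := by
  rw [coe_reindexAlgEquiv, reindex_apply, gradingMatrix, submatrix_diagonal_equiv]
  rfl

variable {p q r} in
theorem chainDegree_eq_add_one {i j : Fin p ⊕ Fin q ⊕ Fin r}
    (h : threeBlockJordan p q r i j ≠ 0) : chainDegree p q r i = chainDegree p q r j + 1 := by
  simp only [threeBlockJordan, jordanBlock_eq_shiftMatrix] at h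
  rcases i with i | i | i <;> rcases j with j | j | j
  case inl.inl | inr.inl.inl | inr.inl.inr.inl | inr.inr.inr.inr =>
    have hshift := eq_add_of_shiftMatrix_apply_ne_zero h
    simp only [chainDegree, Sum.elim_inl, Sum.elim_inr]
    omega
  all_goals exact absurd rfl h

theorem gradingMatrix_mul_sub_mul_gradingMatrix :
    gradingMatrix p q r * threeBlockJordan p q r - threeBlockJordan p q r * gradingMatrix p q r =
      (-2 : ℂ) • threeBlockJordan p q r := by
  refine diagonal_mul_sub_mul_diagonal_eq_smul fun i j hij => ?_
  rw [chainDegree_eq_add_one hij]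
  push_cast
  ring

variable {p q r} in
theorem fromBlocks_mem_closure_centralizerOrbit_threeBlockJordan (hpr : r ≤ p) :
    fromBlocks (jordanBlock p) 0 0
        (fromBlocks (jordanBlock q) (shiftMatrix ℂ q r (1 - r)) 0 (jordanBlock r)) ∈
      closure (centralizerOrbit (gradingMatrix p q r) (threeBlockJordan p q r)) := by
  let P := shiftMatrix ℂ p r (p - r)
  have hEP : shiftMatrix ℂ q p (1 - p) * P = shiftMatrix ℂ q r (1 - r) := by
    rw [shiftMatrix_mul fun i j hij => by omega, sub_add_sub_cancel]
  have hJP : jordanBlock p * P = P * jordanBlock r := by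
    rw [jordanBlock_eq_shiftMatrix, jordanBlock_eq_shiftMatrix,
      shiftMatrix_mul fun i j hij => by omega, shiftMatrix_mul fun i j hij => by omega, add_comm]
  rw [← hEP]
  refine fromBlocks_mem_closure_centralizerOrbit hJP ?_
  rw [← sub_eq_zero, ← zero_smul ℂ P]
  refine diagonal_mul_sub_mul_diagonal_eq_smul fun i j hij => ?_
  have hij' := eq_add_of_shiftMatrix_apply_ne_zero hij
  simp only [Function.comp_apply, chainDegree, Sum.elim_inl, Sum.elim_inr, hij', add_zero]
  push_cast
  ring

end ThreeBlocks

/-- with `F = diag(J_{p+q}, J_r)` there are a diagonal integral matrix `S`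
with `S F - F S = -2 F` and a regular nilpotent `X ∈ M_{q+r}(ℂ)` such that
`diag(J_p, X)` lies in the closure of the orbit of `F` under the centralizer of `S`. -/
theorem two_block_degeneration (p q r : ℕ) (hpr : r ≤ p) (hm : 0 < p + q + r) :
    ∃ (S : Matrix (Fin (p + q + r)) (Fin (p + q + r)) ℂ)
      (X : Matrix (Fin (q + r)) (Fin (q + r)) ℂ),
      S.IsDiag ∧ (∀ i, ∃ z : ℤ, S i i = (z : ℂ)) ∧
      IsNilpotent X ∧ (1 ≤ q + r → X ^ (q + r - 1) ≠ 0) ∧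
      S * twoBlockJordan p q r - twoBlockJordan p q r * S = (-2 : ℂ) • twoBlockJordan p q r ∧
      (Matrix.reindex (finCongr (by omega : p + (q + r) = p + q + r))
          (finCongr (by omega : p + (q + r) = p + q + r))
          (diagBlock p (q + r) (jordanBlock p) X)) ∈
        closure {A : Matrix (Fin (p + q + r)) (Fin (p + q + r)) ℂ |
          ∃ g : GL (Fin (p + q + r)) ℂ,
            (g : Matrix (Fin (p + q + r)) (Fin (p + q + r)) ℂ) * S
              = S * (g : Matrix (Fin (p + q + r)) (Fin (p + q + r)) ℂ) ∧
            A = (g : Matrix (Fin (p + q + r)) (Fin (p + q + r)) ℂ) * twoBlockJordan p q r *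
                  ((g⁻¹ : GL (Fin (p + q + r)) ℂ) : Matrix (Fin (p + q + r)) (Fin (p + q + r)) ℂ)} := by
  let φ := reindexAlgEquiv ℂ ℂ (threeBlockEquiv p q r)
  have hφ : Continuous φ := continuous_id.matrix_reindex _ _
  have hS := reindexAlgEquiv_gradingMatrix p q r
  refine ⟨φ (gradingMatrix p q r), rotatedJordanBlock q r, hS ▸ isDiag_diagonal _,
    fun i => ⟨_, by rw [hS, diagonal_apply_eq]⟩, isNilpotent_rotatedJordanBlock q r,
    rotatedJordanBlock_pow_sub_one_ne_zero, ?_, ?_⟩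
  · rw [twoBlockJordan_eq_reindex_threeBlockJordan, ← map_mul, ← map_mul, ← map_sub,
      gradingMatrix_mul_sub_mul_gradingMatrix, map_smul]
  · rw [rotatedJordanBlock_eq_reindex_fromBlocks, reindex_finCongr_diagBlock,
      twoBlockJordan_eq_reindex_threeBlockJordan]
    exact map_mem_closure_centralizerOrbit hφ
      (fromBlocks_mem_closure_centralizerOrbit_threeBlockJordan hpr)
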